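/- arXiv:1302.5789 — 2 statements merged into one kernel-verified Lean document; each statement's English description precedes it below -/
import Mathlib

section
/- If ℋ ⊆ ℋ' are finite-dimensional real Hilbert spaces, Ω and Ω' are their spaces of half-spaces with invariant measures μ and μ', then the pushforward ν of μ' along M' ↦ M' ∩ ℋ (restricted to half-spaces meeting ℋ in a half-space) is invariant under rigid motions of ℋ and satisfies ν{M : v ∈ M, w ∉ M} = ‖v − w‖ for v,w ∈ ℋ; consequently ν = μ. -/
open MeasureTheory
open scoped RealInnerProductSpace ENNReal

/-- The space of (closed affine) half-spaces of a real inner product space. -/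
def HalfSpaces (H : Type*) [NormedAddCommGroup H] [InnerProductSpace ℝ H] : Type _ :=
  {M : Set H // ∃ (ξ : H) (t : ℝ), ‖ξ‖ = 1 ∧ M = {u | t ≤ ⟪u, ξ⟫}}

/-- `μ` is the natural measure on the space of half-spaces: the σ-algebra is generated by
the sets `S_v = {M : v ∈ M}`, `μ` is invariant under rigid motions, and it is normalized
so that `μ {M : v ∈ M, w ∉ M} = ‖v - w‖`. -/
def IsHalfSpaceMeasure (H : Type*) [NormedAddCommGroup H] [InnerProductSpace ℝ H]
    [m : MeasurableSpace (HalfSpaces H)] (μ : Measure (HalfSpaces H)) : Prop :=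
  m = MeasurableSpace.generateFrom {A | ∃ v : H, A = {M : HalfSpaces H | v ∈ M.1}} ∧
  (∀ (φ : H ≃ᵢ H) (A : Set (HalfSpaces H)), MeasurableSet A →
    μ {M : HalfSpaces H | ⇑φ '' M.1 ∈ Subtype.val '' A} = μ A) ∧
  (∀ v w : H, μ {M : HalfSpaces H | v ∈ M.1 ∧ w ∉ M.1} = ENNReal.ofReal ‖v - w‖)

open Set Filter Topology

/-- The distribution of the normals of the half-spaces with offset in `B`. -/
noncomputable def normals {X : Type*} [MeasurableSpace X] (m : Measure (X × ℝ)) (B : Set ℝ) :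
    Measure X :=
  (m.restrict (Prod.snd ⁻¹' B)).map Prod.fst

theorem normals_apply {X : Type*} [MeasurableSpace X] {m : Measure (X × ℝ)} {A : Set X}
    (hA : MeasurableSet A) (B : Set ℝ) : normals m B A = m (A ×ˢ B) := by
  rw [normals, Measure.map_apply measurable_fst hA, Measure.restrict_apply (measurable_fst hA)]
  rfl

section CoordinateMeasures

variable {H : Type*} [NormedAddCommGroup H] [InnerProductSpace ℝ H]
  [MeasurableSpace H] [BorelSpace H]

/-- The characteristic function of a rotation-invariant measure is radial. -/
theorem charFun_eq_of_norm_eq {σ : Measure H} (hσ : ∀ A : H ≃ₗᵢ[ℝ] H, σ.map A = σ)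
    {x y : H} (hxy : ‖x‖ = ‖y‖) : charFun σ x = charFun σ y := by
  let A : H ≃ₗᵢ[ℝ] H := (Submodule.span ℝ {x - y})ᗮ.reflection
  have hA : A x = y := Submodule.reflection_sub hxy
  rw [charFun_apply, charFun_apply, ← hA]
  conv_rhs => rw [← hσ A]
  rw [integral_map A.continuous.aemeasurable
    (by apply Continuous.aestronglyMeasurable; fun_prop)]
  simp

/-- Finite rotation-invariant measures concentrated on the unit sphere are proportional. -/
theorem rotationInvariant_smul_eq [FiniteDimensional ℝ H] {σ τ : Measure H}
    [IsFiniteMeasure σ] [IsFiniteMeasure τ]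
    (hσ : ∀ A : H ≃ₗᵢ[ℝ] H, σ.map A = σ) (hτ : ∀ A : H ≃ₗᵢ[ℝ] H, τ.map A = τ)
    (hσ1 : ∀ᵐ x ∂σ, ‖x‖ = 1) (hτ1 : ∀ᵐ x ∂τ, ‖x‖ = 1) :
    σ univ • τ = τ univ • σ := by
  have : CompleteSpace H := FiniteDimensional.complete ℝ H
  have mean {α β : Measure H} [IsFiniteMeasure α] [IsFiniteMeasure β]
      (hα : ∀ A : H ≃ₗᵢ[ℝ] H, α.map A = α) (hβ1 : ∀ᵐ x ∂β, ‖x‖ = 1) (t : H) :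
      ∫ x, charFun α (‖t‖ • x) ∂β = β.real univ • charFun α t := by
    rw [← integral_const]
    refine integral_congr_ae ?_
    filter_upwards [hβ1] with x hx
    exact charFun_eq_of_norm_eq hα (by simp [norm_smul, hx])
  have h1 : IsFiniteMeasure (σ univ • τ) := Measure.smul_finite _ (measure_ne_top _ _)
  have h2 : IsFiniteMeasure (τ univ • σ) := Measure.smul_finite _ (measure_ne_top _ _)
  apply Measure.ext_of_charFun
  ext t
  have key : σ.real univ • charFun τ t = τ.real univ • charFun σ t := by
    rw [← mean hτ hσ1, ← mean hσ hτ1]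
    simp only [charFun_apply]
    rw [integral_integral_swap]
    · simp [inner_smul_right, real_inner_comm]
    · refine Integrable.of_bound (C := 1) ?_ (ae_of_all _ fun p => ?_)
      · apply Continuous.aestronglyMeasurable
        simp only [Function.uncurry_def]
        fun_prop
      · simp only [Function.uncurry_def]
        rw [Complex.norm_exp_ofReal_mul_I]
  simp only [charFun_apply, integral_smul_measure] at key ⊢
  exact key

/-- The properties of the measure on half-spaces, transported to pairs `(ξ, t)` consisting of a
unit inner normal and an offset. -/
structure IsCoordHalfSpaceMeasure (m : Measure (H × ℝ)) : Prop where
  norm_eq_one : ∀ᵐ p ∂m, ‖p.1‖ = 1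
  map_rotate : ∀ A : H ≃ₗᵢ[ℝ] H, m.map (Prod.map A id) = m
  map_shear : ∀ v : H, m.map (fun p => (p.1, p.2 + ⟪v, p.1⟫)) = m
  separating : ∀ v w : H, m {p | p.2 ≤ ⟪v, p.1⟫ ∧ ⟪w, p.1⟫ < p.2} = ENNReal.ofReal ‖v - w‖

namespace IsCoordHalfSpaceMeasure

variable {m m' : Measure (H × ℝ)}

theorem map_normals (hm : IsCoordHalfSpaceMeasure m) {B : Set ℝ} (hB : MeasurableSet B)
    (A : H ≃ₗᵢ[ℝ] H) : (normals m B).map A = normals m B := by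
  have hA : Measurable A := A.continuous.measurable
  ext E hE
  rw [Measure.map_apply hA hE, normals_apply (hA hE), normals_apply hE]
  conv_rhs => rw [← hm.map_rotate A]
  rw [Measure.map_apply (hA.prodMap measurable_id) (hE.prod hB)]
  rfl

theorem normals_norm_eq_one (hm : IsCoordHalfSpaceMeasure m) (B : Set ℝ) :
    ∀ᵐ x ∂normals m B, ‖x‖ = 1 := by
  rw [normals, ae_map_iff measurable_fst.aemeasurable
    (measurableSet_eq_fun measurable_norm measurable_const)]
  exact ae_restrict_of_ae hm.norm_eq_one

variable [FiniteDimensional ℝ H]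

/-- A bounded set of offsets carries finite mass. -/
theorem measure_offset_Icc_lt_top (hm : IsCoordHalfSpaceMeasure m) (C : ℝ) :
    m (Prod.snd ⁻¹' Icc (-C) C) < ∞ := by
  rcases lt_or_ge C 0 with hC | hC
  · simp [Icc_eq_empty (show ¬ -C ≤ C by linarith)]
  have hS : MeasurableSet (Prod.snd ⁻¹' Icc (-C) C : Set (H × ℝ)) :=
    measurable_snd measurableSet_Icc
  let τ : Measure H := (m.restrict (Prod.snd ⁻¹' Icc (-C) C)).map Prod.fst
  have hτ : τ (Metric.sphere 0 1) < ∞ := by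
    refine (isCompact_sphere (0 : H) 1).measure_lt_top_of_nhdsWithin fun ξ hξ => ?_
    have hξ : ‖ξ‖ = 1 := by simpa using hξ
    let U : Set H := {η | C < ⟪(C + 1) • ξ, η⟫}
    have hU : IsOpen U := isOpen_lt (by fun_prop) (by fun_prop)
    have hξU : ξ ∈ U := by simp [U, inner_smul_left, hξ]
    refine ⟨U, mem_nhdsWithin_of_mem_nhds (hU.mem_nhds hξU), ?_⟩
    rw [Measure.map_apply measurable_fst hU.measurableSet,
      Measure.restrict_apply (measurable_fst hU.measurableSet)]
    refine (measure_mono ?_).trans_lt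
      ((hm.separating ((C + 1) • ξ) (-((C + 1) • ξ))).trans_lt ENNReal.ofReal_lt_top)
    rintro p ⟨hp1, hp2, hp3⟩
    have hp1 : C < ⟪(C + 1) • ξ, p.1⟫ := hp1
    exact ⟨hp3.trans hp1.le, by rw [inner_neg_left]; linarith⟩
  rw [Measure.map_apply measurable_fst Metric.isClosed_sphere.measurableSet,
    Measure.restrict_apply (measurable_fst Metric.isClosed_sphere.measurableSet)] at hτ
  refine (measure_mono_ae ?_).trans_lt hτ
  filter_upwards [hm.norm_eq_one] with p hp hpC
  exact ⟨by simpa using hp, hpC⟩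

theorem isLocallyFiniteMeasure_map_snd (hm : IsCoordHalfSpaceMeasure m) :
    IsLocallyFiniteMeasure (m.map Prod.snd) := by
  refine ⟨fun x => ⟨Icc (-(|x| + 1)) (|x| + 1), Icc_mem_nhds ?_ ?_, ?_⟩⟩
  · linarith [neg_abs_le x]
  · linarith [le_abs_self x]
  · rw [Measure.map_apply measurable_snd measurableSet_Icc]
    exact hm.measure_offset_Icc_lt_top _

theorem isFiniteMeasure_normals (hm : IsCoordHalfSpaceMeasure m) {B : Set ℝ} {C : ℝ}
    (hB : B ⊆ Icc (-C) C) : IsFiniteMeasure (normals m B) := by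
  refine ⟨?_⟩
  rw [normals_apply MeasurableSet.univ]
  exact (measure_mono fun p (hp : p ∈ univ ×ˢ B) => hB hp.2).trans_lt
    (hm.measure_offset_Icc_lt_top C)

/-- A measure on coordinates is, up to scaling, the product of any rotation-invariant measure on
the sphere with the distribution of the offset. -/
theorem smul_eq_prod (hm : IsCoordHalfSpaceMeasure m) {σ : Measure H} [IsFiniteMeasure σ]
    (hσ : ∀ A : H ≃ₗᵢ[ℝ] H, σ.map A = σ) (hσ1 : ∀ᵐ x ∂σ, ‖x‖ = 1) :
    σ univ • m = σ.prod (m.map Prod.snd) := by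
  have := hm.isLocallyFiniteMeasure_map_snd
  refine (Measure.prod_eq fun A B hA hB => ?_).symm
  let lhs : Measure ℝ := σ univ • (m.restrict (Prod.fst ⁻¹' A)).map Prod.snd
  let rhs : Measure ℝ := σ A • m.map Prod.snd
  suffices h : lhs = rhs by
    have hAB := congrArg (fun ρ : Measure ℝ => ρ B) h
    simp only [lhs, rhs, Measure.smul_apply, smul_eq_mul] at hAB
    rw [Measure.map_apply measurable_snd hB, Measure.restrict_apply (measurable_snd hB),
      inter_comm] at hAB
    exact hAB
  refine Measure.ext_of_iUnion_eq_univ (s := fun n : ℕ => Icc (-(n : ℝ)) n) ?_ fun n => ?_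
  · refine eq_univ_of_forall fun x => mem_iUnion.2 ?_
    obtain ⟨n, hn⟩ := exists_nat_ge |x|
    exact ⟨n, abs_le.1 hn⟩
  · ext E hE
    rw [Measure.restrict_apply hE, Measure.restrict_apply hE]
    have hF : MeasurableSet (E ∩ Icc (-(n : ℝ)) n) := hE.inter measurableSet_Icc
    generalize hFE : E ∩ Icc (-(n : ℝ)) n = F at hF
    have hFn : F ⊆ Icc (-(n : ℝ)) n := hFE ▸ inter_subset_right
    have := hm.isFiniteMeasure_normals hFn
    have key := congrArg (fun α : Measure H => α A)
      (rotationInvariant_smul_eq hσ (hm.map_normals hF) hσ1 (hm.normals_norm_eq_one F))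
    simp only [Measure.smul_apply, smul_eq_mul] at key
    rw [normals_apply hA, normals_apply MeasurableSet.univ] at key
    simp only [lhs, rhs, Measure.smul_apply, smul_eq_mul]
    rw [Measure.map_apply measurable_snd hF, Measure.map_apply measurable_snd hF,
      Measure.restrict_apply (measurable_snd hF), inter_comm, mul_comm (σ A)]
    rw [univ_prod] at key
    exact key

theorem measurable_measure_preimage_add_inner (ρ : Measure ℝ) [SFinite ρ] {B : Set ℝ}
    (hB : MeasurableSet B) : Measurable fun p : H × H => ρ ((· + ⟪p.1, p.2⟫) ⁻¹' B) := by
  have hcont : Continuous fun q : (H × H) × ℝ => q.2 + ⟪q.1.1, q.1.2⟫ := by fun_prop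
  exact measurable_measure_prodMk_left (hcont.measurable hB)

/-- For almost every normal `ξ`, shifting a set by `⟪v, ξ⟫` does not change its mass under the
distribution of the offset. -/
theorem ae_measure_preimage_add_inner (hm : IsCoordHalfSpaceMeasure m) {σ : Measure H}
    [IsFiniteMeasure σ] (hσ : ∀ A : H ≃ₗᵢ[ℝ] H, σ.map A = σ) (hσ1 : ∀ᵐ x ∂σ, ‖x‖ = 1) (v : H)
    {B : Set ℝ} (hB : MeasurableSet B) :
    ∀ᵐ ξ ∂σ, m.map Prod.snd ((· + ⟪v, ξ⟫) ⁻¹' B) = m.map Prod.snd B := by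
  have hloc := hm.isLocallyFiniteMeasure_map_snd
  have hprod := hm.smul_eq_prod hσ hσ1
  generalize m.map Prod.snd = ρ at hloc hprod ⊢
  have hmv : Measurable fun ξ : H => ρ ((· + ⟪v, ξ⟫) ⁻¹' B) :=
    (measurable_measure_preimage_add_inner ρ hB).comp (measurable_const.prodMk measurable_id)
  refine ae_eq_of_forall_setLIntegral_eq_of_sigmaFinite hmv measurable_const fun A hA _ => ?_
  have hcont : Continuous fun p : H × ℝ => (p.1, p.2 + ⟪v, p.1⟫) := by fun_prop
  have hsh := hcont.measurable
  have hAB : MeasurableSet (A ×ˢ B) := hA.prod hB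
  have hinv : (σ.prod ρ).map (fun p => (p.1, p.2 + ⟪v, p.1⟫)) = σ.prod ρ := by
    rw [← hprod, Measure.map_smul, hm.map_shear]
  have h : (σ.prod ρ).map (fun p => (p.1, p.2 + ⟪v, p.1⟫)) (A ×ˢ B) = σ.prod ρ (A ×ˢ B) := by
    rw [hinv]
  rw [Measure.map_apply hsh hAB, Measure.prod_prod, Measure.prod_apply (hsh hAB)] at h
  rw [setLIntegral_const, mul_comm, ← h, ← lintegral_indicator hA]
  refine lintegral_congr fun ξ => ?_
  by_cases hξ : ξ ∈ A
  · rw [indicator_of_mem hξ]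
    congr 1
    ext t
    simp [hξ]
  · rw [indicator_of_notMem hξ, eq_comm, ← measure_empty (μ := ρ)]
    congr 1
    ext t
    simp [hξ]

/-- The distribution of the offset is translation invariant. -/
theorem map_add_offset (hm : IsCoordHalfSpaceMeasure m) {σ : Measure H} [IsFiniteMeasure σ]
    (hσ0 : σ ≠ 0) (hσ : ∀ A : H ≃ₗᵢ[ℝ] H, σ.map A = σ) (hσ1 : ∀ᵐ x ∂σ, ‖x‖ = 1) (x : ℝ) :
    (m.map Prod.snd).map (· + x) = m.map Prod.snd := by
  have hloc := hm.isLocallyFiniteMeasure_map_snd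
  have hae (v : H) (a b : ℚ) :=
    hm.ae_measure_preimage_add_inner hσ hσ1 v (measurableSet_Ioo (a := (a : ℝ)) (b := b))
  generalize m.map Prod.snd = ρ at hloc hae ⊢
  let P : H → H → Prop := fun v ξ => ∀ a b : ℚ,
    ρ ((· + ⟪v, ξ⟫) ⁻¹' Ioo (a : ℝ) b) = ρ (Ioo (a : ℝ) b)
  have hP (v : H) : ∀ᵐ ξ ∂σ, P v ξ := ae_all_iff.2 fun a => ae_all_iff.2 fun b => hae v a b
  have hPmeas : MeasurableSet {p : H × H | P p.1 p.2} := by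
    have : {p : H × H | P p.1 p.2} = ⋂ (a : ℚ) (b : ℚ),
        {p : H × H | ρ ((· + ⟪p.1, p.2⟫) ⁻¹' Ioo (a : ℝ) b) = ρ (Ioo (a : ℝ) b)} := by
      ext p
      simp only [P, mem_iInter, mem_ofPred_eq]
    rw [this]
    exact MeasurableSet.iInter fun a => MeasurableSet.iInter fun b =>
      measurableSet_eq_fun (measurable_measure_preimage_add_inner ρ measurableSet_Ioo)
        measurable_const
  have ⟨vol, hvol⟩ : ∃ vol : Measure H, vol.IsAddHaarMeasure := ⟨Measure.addHaar, inferInstance⟩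
  have hswap : ∀ᵐ ξ ∂σ, ∀ᵐ v ∂vol, P v ξ :=
    (Measure.ae_ae_comm hPmeas).1 (ae_of_all _ hP)
  have : NeBot (ae σ) := ae_neBot.2 hσ0
  obtain ⟨ξ, hξ, hξ1⟩ := (hswap.and hσ1).exists
  have hinv {v : H} (hv : P v ξ) : ρ.map (· + ⟪v, ξ⟫) = ρ := by
    refine (Real.measure_ext_Ioo_rat fun a b => ?_).symm
    rw [Measure.map_apply (measurable_add_const _) measurableSet_Ioo]
    exact (hv a b).symm
  have hreflect : ∀ᵐ v ∂vol, P (x • ξ - v) ξ :=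
    (Measure.measurePreserving_sub_left vol (x • ξ)).quasiMeasurePreserving.ae hξ
  obtain ⟨v, hv, hv_reflect⟩ := (hξ.and hreflect).exists
  have hx : (· + x : ℝ → ℝ) = (· + ⟪x • ξ - v, ξ⟫) ∘ (· + ⟪v, ξ⟫) := by
    ext t
    simp [inner_sub_left, inner_smul_left, hξ1]
  rw [hx, ← Measure.map_map (measurable_add_const _) (measurable_add_const _),
    hinv hv, hinv hv_reflect]

/-- The distribution of the offset is a multiple of Lebesgue measure. -/
theorem exists_smul_eq_smul_prod_volume (hm : IsCoordHalfSpaceMeasure m) {σ : Measure H}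
    [IsFiniteMeasure σ] (hσ0 : σ ≠ 0) (hσ : ∀ A : H ≃ₗᵢ[ℝ] H, σ.map A = σ)
    (hσ1 : ∀ᵐ x ∂σ, ‖x‖ = 1) :
    ∃ c : ℝ≥0∞, σ univ • m = c • σ.prod (volume : Measure ℝ) := by
  have := hm.isLocallyFiniteMeasure_map_snd
  have : (m.map Prod.snd).IsAddLeftInvariant :=
    ⟨fun x => by simpa only [add_comm] using hm.map_add_offset hσ0 hσ hσ1 x⟩
  refine ⟨(m.map Prod.snd).addHaarScalarFactor volume, ?_⟩
  rw [hm.smul_eq_prod hσ hσ1]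
  conv_lhs => rw [Measure.isAddLeftInvariant_eq_smul (m.map Prod.snd) volume]
  exact Measure.prod_smul_right _

/-- The properties of `IsCoordHalfSpaceMeasure` determine the measure. -/
theorem unique (hm : IsCoordHalfSpaceMeasure m) (hm' : IsCoordHalfSpaceMeasure m') : m = m' := by
  rcases subsingleton_or_nontrivial H with hH | hH
  · have hzero {α : Measure (H × ℝ)} (hα : IsCoordHalfSpaceMeasure α) : α = 0 := by
      rw [← ae_eq_bot, ← eventually_false_iff_eq_bot]
      filter_upwards [hα.norm_eq_one] with p hp
      simp [Subsingleton.elim p.1 0] at hp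
    rw [hzero hm, hzero hm']
  obtain ⟨v, hv⟩ := exists_ne (0 : H)
  have hm0 : m ≠ 0 := by
    rintro rfl
    have := hm.separating v 0
    simp [hv, eq_comm] at this
  obtain ⟨n, hn⟩ : ∃ n : ℕ, m (Prod.snd ⁻¹' Icc (-(n : ℝ)) n) ≠ 0 := by
    by_contra! h
    refine hm0 (Measure.measure_univ_eq_zero.1 (measure_mono_null ?_ (measure_iUnion_null h)))
    intro p _
    obtain ⟨n, hn⟩ := exists_nat_ge |p.2|
    exact mem_iUnion.2 ⟨n, abs_le.1 hn⟩
  let σ := normals m (Icc (-(n : ℝ)) n)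
  have hσfin : IsFiniteMeasure σ := hm.isFiniteMeasure_normals subset_rfl
  have hσuniv : σ univ ≠ 0 := by
    rwa [normals_apply MeasurableSet.univ, univ_prod]
  have hσ0 : σ ≠ 0 := fun h => hσuniv (by simp [h])
  have hσ := hm.map_normals (measurableSet_Icc (a := -(n : ℝ)) (b := n))
  have hσ1 := hm.normals_norm_eq_one (Icc (-(n : ℝ)) n)
  obtain ⟨c, hc⟩ := hm.exists_smul_eq_smul_prod_volume hσ0 hσ hσ1
  obtain ⟨c', hc'⟩ := hm'.exists_smul_eq_smul_prod_volume hσ0 hσ hσ1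
  have hval {α : Measure (H × ℝ)} (hα : IsCoordHalfSpaceMeasure α) {d : ℝ≥0∞}
      (hd : σ univ • α = d • σ.prod (volume : Measure ℝ)) :
      d * σ.prod (volume : Measure ℝ) {p | p.2 ≤ ⟪v, p.1⟫ ∧ ⟪(0 : H), p.1⟫ < p.2} =
        σ univ * ENNReal.ofReal ‖v‖ := by
    have h := congrArg
      (fun β : Measure (H × ℝ) => β {p | p.2 ≤ ⟪v, p.1⟫ ∧ ⟪(0 : H), p.1⟫ < p.2}) hd
    simp only [Measure.smul_apply, smul_eq_mul, hα.separating, sub_zero] at h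
    exact h.symm
  have h1 := hval hm hc
  have h2 := hval hm' hc'
  have hpos : σ univ * ENNReal.ofReal ‖v‖ ≠ 0 := by simp [hσuniv, hv]
  have hfin : σ univ * ENNReal.ofReal ‖v‖ ≠ ∞ :=
    ENNReal.mul_ne_top (measure_ne_top _ _) ENNReal.ofReal_ne_top
  have hcc : c = c' := by
    generalize σ.prod (volume : Measure ℝ) {p | p.2 ≤ ⟪v, p.1⟫ ∧ ⟪(0 : H), p.1⟫ < p.2} = X at h1 h2
    have hX0 : X ≠ 0 := by
      rintro rfl
      exact hpos (by rw [← h1, mul_zero])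
    have hX : X ≠ ∞ := by
      rintro rfl
      refine hfin ?_
      rw [← h1]
      refine ENNReal.mul_top ?_
      rintro rfl
      exact hpos (by rw [← h1, zero_mul])
    exact (ENNReal.mul_left_inj hX0 hX).1 (h1.trans h2.symm)
  have hmm : σ univ • m = σ univ • m' := by rw [hc, hc', hcc]
  ext E _
  have hE := congrArg (fun β : Measure (H × ℝ) => β E) hmm
  simp only [Measure.smul_apply, smul_eq_mul] at hE
  exact (ENNReal.mul_right_inj hσuniv (measure_ne_top _ _)).1 hE

end IsCoordHalfSpaceMeasure

end CoordinateMeasures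

namespace HalfSpaces

section Coordinates

variable {H : Type*} [NormedAddCommGroup H] [InnerProductSpace ℝ H]

/-- The half-space with unit inner normal `ξ` and offset `t`. -/
def mk (ξ : H) (t : ℝ) (hξ : ‖ξ‖ = 1) : HalfSpaces H :=
  ⟨{u | t ≤ ⟪u, ξ⟫}, ξ, t, hξ, rfl⟩

theorem ext_val {M N : HalfSpaces H} (h : M.1 = N.1) : M = N :=
  Subtype.ext h

/-- The unit inner normal and the offset of a half-space. -/
noncomputable def coord (M : HalfSpaces H) : H × ℝ :=
  (M.2.choose, M.2.choose_spec.choose)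

theorem norm_coord_fst (M : HalfSpaces H) : ‖(coord M).1‖ = 1 :=
  M.2.choose_spec.choose_spec.1

theorem mem_iff (M : HalfSpaces H) (u : H) : u ∈ M.1 ↔ (coord M).2 ≤ ⟪u, (coord M).1⟫ :=
  Set.ext_iff.1 M.2.choose_spec.choose_spec.2 u

/-- The normal and the offset are determined by the half-space. -/
theorem normal_offset_unique {ξ ξ' : H} {t t' : ℝ} (hξ : ‖ξ‖ = 1) (hξ' : ‖ξ'‖ = 1)
    (h : ∀ u : H, t ≤ ⟪u, ξ⟫ ↔ t' ≤ ⟪u, ξ'⟫) : ξ = ξ' ∧ t = t' := by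
  have hself : ⟪ξ, ξ⟫ = (1 : ℝ) := by simp [hξ]
  have hself' : ⟪ξ', ξ'⟫ = (1 : ℝ) := by simp [hξ']
  have hline (r : ℝ) : t ≤ t' * ⟪ξ, ξ'⟫ + r * (1 - ⟪ξ, ξ'⟫ ^ 2) := by
    have := (h (t' • ξ' + r • (ξ - ⟪ξ, ξ'⟫ • ξ'))).2 (by
      simp only [inner_add_left, inner_sub_left, inner_smul_left, hself', conj_trivial]
      linarith)
    simp only [inner_add_left, inner_sub_left, inner_smul_left, hself, real_inner_comm ξ ξ',
      conj_trivial] at this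
    linarith
  have hk : ⟪ξ, ξ'⟫ ^ 2 = 1 := by
    by_contra hne
    have hne' : 1 - ⟪ξ, ξ'⟫ ^ 2 ≠ 0 := fun h0 => hne (by linarith)
    have := hline ((t - t' * ⟪ξ, ξ'⟫ - 1) / (1 - ⟪ξ, ξ'⟫ ^ 2))
    rw [div_mul_cancel₀ _ hne'] at this
    linarith
  rcases sq_eq_one_iff.1 hk with hk | hk
  · obtain rfl : ξ = ξ' := (inner_eq_one_iff_of_norm_eq_one hξ hξ').1 hk
    have h1 := (h (t • ξ)).1 (by simp [inner_smul_left, hξ])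
    have h2 := (h (t' • ξ)).2 (by simp [inner_smul_left, hξ])
    simp only [inner_smul_left, hself, conj_trivial, mul_one] at h1 h2
    exact ⟨rfl, le_antisymm h2 h1⟩
  · have h1 := (h (max t (1 - t') • ξ)).1 (by simp [inner_smul_left, hξ])
    simp only [inner_smul_left, hk, conj_trivial] at h1
    linarith [le_max_right t (1 - t')]

theorem coord_eq {M : HalfSpaces H} {ξ : H} {t : ℝ} (hξ : ‖ξ‖ = 1)
    (h : ∀ u : H, u ∈ M.1 ↔ t ≤ ⟪u, ξ⟫) : coord M = (ξ, t) := by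
  have := normal_offset_unique (norm_coord_fst M) hξ fun u => (mem_iff M u).symm.trans (h u)
  exact Prod.ext this.1 this.2

theorem coord_smul_mem (M : HalfSpaces H) : (coord M).2 • (coord M).1 ∈ M.1 := by
  rw [mem_iff, inner_smul_left]
  simp [norm_coord_fst]

theorem exists_not_mem (M : HalfSpaces H) : ∃ u, u ∉ M.1 := by
  refine ⟨((coord M).2 - 1) • (coord M).1, ?_⟩
  rw [mem_iff, inner_smul_left]
  simp [norm_coord_fst]

/-- Every neighbourhood of a point of a half-space meets the interior of the half-space. -/
theorem exists_mem_dense (M : HalfSpaces H) {D U : Set H} (hD : Dense D) (hU : IsOpen U) {u : H}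
    (huU : u ∈ U) (huM : u ∈ M.1) : ∃ d ∈ D, d ∈ U ∧ d ∈ M.1 := by
  have hlim : Tendsto (fun ε : ℝ => u + ε • (coord M).1) (𝓝[>] 0) (𝓝 u) := by
    have : Continuous fun ε : ℝ => u + ε • (coord M).1 := by fun_prop
    simpa using (this.tendsto 0).mono_left nhdsWithin_le_nhds
  obtain ⟨ε, hεU, hε⟩ :=
    ((hlim.eventually (hU.mem_nhds huU)).and self_mem_nhdsWithin).exists
  have hV : IsOpen {x : H | (coord M).2 < ⟪x, (coord M).1⟫} := isOpen_lt (by fun_prop) (by fun_prop)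
  have hεV : (coord M).2 < ⟪u + ε • (coord M).1, (coord M).1⟫ := by
    rw [mem_iff] at huM
    have hε : 0 < ε := hε
    simp only [inner_add_left, inner_smul_left, real_inner_self_eq_norm_sq, norm_coord_fst,
      conj_trivial]
    linarith
  obtain ⟨d, ⟨hdU, hdV⟩, hdD⟩ := hD.inter_open_nonempty _ (hU.inter hV) ⟨_, hεU, hεV⟩
  exact ⟨d, hdD, hdU, (mem_iff M d).2 (le_of_lt hdV)⟩

theorem isClosed (M : HalfSpaces H) : IsClosed M.1 := by
  have : M.1 = {u | (coord M).2 ≤ ⟪u, (coord M).1⟫} := by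
    ext u
    exact mem_iff M u
  rw [this]
  exact isClosed_le (by fun_prop) (by fun_prop)

theorem eq_of_dense {M N : HalfSpaces H} {D : Set H} (hD : Dense D)
    (h : ∀ d ∈ D, d ∈ M.1 ↔ d ∈ N.1) : M = N := by
  have hle {M N : HalfSpaces H} (h : ∀ d ∈ D, d ∈ M.1 → d ∈ N.1) : M.1 ⊆ N.1 := by
    intro u hu
    by_contra huN
    obtain ⟨d, hdD, hdN, hdM⟩ := exists_mem_dense M hD N.isClosed.isOpen_compl huN hu
    exact hdN (h d hdD hdM)
  exact ext_val (subset_antisymm (hle fun d hd => (h d hd).1) (hle fun d hd => (h d hd).2))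

theorem apply_eq_toRealLinearIsometryEquiv_add (φ : H ≃ᵢ H) (u : H) :
    φ u = φ.toRealLinearIsometryEquiv u + φ 0 := by
  simp

theorem mem_image_iff (φ : H ≃ᵢ H) (M : HalfSpaces H) (u : H) :
    u ∈ φ '' M.1 ↔ (coord M).2 + ⟪φ 0, φ.toRealLinearIsometryEquiv (coord M).1⟫ ≤
      ⟪u, φ.toRealLinearIsometryEquiv (coord M).1⟫ := by
  obtain ⟨w, rfl⟩ := φ.surjective u
  rw [φ.injective.mem_set_image, mem_iff, apply_eq_toRealLinearIsometryEquiv_add φ w,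
    inner_add_left, LinearIsometryEquiv.inner_map_map, add_le_add_iff_right]

/-- The action of rigid motions on half-spaces. -/
def image (φ : H ≃ᵢ H) (M : HalfSpaces H) : HalfSpaces H :=
  ⟨φ '' M.1, φ.toRealLinearIsometryEquiv (coord M).1,
    (coord M).2 + ⟪φ 0, φ.toRealLinearIsometryEquiv (coord M).1⟫,
    by rw [LinearIsometryEquiv.norm_map, norm_coord_fst], Set.ext fun u => mem_image_iff φ M u⟩

theorem coord_image (φ : H ≃ᵢ H) (M : HalfSpaces H) :
    coord (image φ M) = (φ.toRealLinearIsometryEquiv (coord M).1,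
      (coord M).2 + ⟪φ 0, φ.toRealLinearIsometryEquiv (coord M).1⟫) :=
  coord_eq (by rw [LinearIsometryEquiv.norm_map, norm_coord_fst]) (mem_image_iff φ M)

theorem setOf_image_mem (φ : H ≃ᵢ H) (A : Set (HalfSpaces H)) :
    {M : HalfSpaces H | φ '' M.1 ∈ Subtype.val '' A} = image φ ⁻¹' A := by
  ext M
  constructor
  · rintro ⟨N, hN, h⟩
    obtain rfl : N = image φ M := ext_val h
    exact hN
  · exact fun h => ⟨image φ M, h, rfl⟩

variable [mΩ : MeasurableSpace (HalfSpaces H)]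

theorem measurableSet_mem
    (hΩ : mΩ = MeasurableSpace.generateFrom {A | ∃ v : H, A = {M : HalfSpaces H | v ∈ M.1}})
    (v : H) : MeasurableSet {M : HalfSpaces H | v ∈ M.1} := by
  subst hΩ
  exact MeasurableSpace.measurableSet_generateFrom ⟨v, rfl⟩

theorem measurable_of_measurableSet_mem
    (hΩ : mΩ = MeasurableSpace.generateFrom {A | ∃ v : H, A = {M : HalfSpaces H | v ∈ M.1}})
    {X : Type*} [MeasurableSpace X] {f : X → HalfSpaces H}
    (hf : ∀ v : H, MeasurableSet {x | v ∈ (f x).1}) : Measurable f := by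
  subst hΩ
  refine measurable_generateFrom ?_
  rintro _ ⟨v, rfl⟩
  exact hf v

theorem measurable_image
    (hΩ : mΩ = MeasurableSpace.generateFrom {A | ∃ v : H, A = {M : HalfSpaces H | v ∈ M.1}})
    (φ : H ≃ᵢ H) : Measurable (image φ) := by
  refine measurable_of_measurableSet_mem hΩ fun v => ?_
  convert measurableSet_mem hΩ (φ.symm v) using 1
  ext M
  change v ∈ φ '' M.1 ↔ φ.symm v ∈ M.1
  rw [← φ.injective.mem_set_image (a := φ.symm v), φ.apply_symm_apply]

theorem exists_preimage_coord [MeasurableSpace H] [BorelSpace H]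
    (hΩ : mΩ = MeasurableSpace.generateFrom {A | ∃ v : H, A = {M : HalfSpaces H | v ∈ M.1}})
    {E : Set (HalfSpaces H)} (hE : MeasurableSet E) :
    ∃ F : Set (H × ℝ), MeasurableSet F ∧ coord ⁻¹' F = E := by
  have hle : mΩ ≤ MeasurableSpace.comap coord inferInstance := by
    rw [hΩ]
    refine MeasurableSpace.generateFrom_le ?_
    rintro _ ⟨v, rfl⟩
    refine ⟨{p | p.2 ≤ ⟪v, p.1⟫}, measurableSet_le measurable_snd ?_, ?_⟩
    · apply Continuous.measurable
      fun_prop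
    · ext M
      exact (mem_iff M v).symm
  exact hle E hE

variable [FiniteDimensional ℝ H]

theorem countablySeparated
    (hΩ : mΩ = MeasurableSpace.generateFrom {A | ∃ v : H, A = {M : HalfSpaces H | v ∈ M.1}}) :
    MeasurableSpace.CountablySeparated (HalfSpaces H) := by
  obtain ⟨D, hDc, hD⟩ := TopologicalSpace.exists_countable_dense H
  refine ⟨⟨(fun v => {M : HalfSpaces H | v ∈ M.1}) '' D, hDc.image _, ?_, ?_⟩⟩
  · rintro _ ⟨v, _, rfl⟩
    exact measurableSet_mem hΩ v
  · exact fun M _ N _ h => eq_of_dense hD fun d hd => h _ ⟨d, hd, rfl⟩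

variable [MeasurableSpace H] [BorelSpace H]

theorem measurable_coord
    (hΩ : mΩ = MeasurableSpace.generateFrom {A | ∃ v : H, A = {M : HalfSpaces H | v ∈ M.1}}) :
    Measurable (coord : HalfSpaces H → H × ℝ) := by
  have : CompleteSpace H := FiniteDimensional.complete ℝ H
  have := countablySeparated hΩ
  have hsph : MeasurableSet (Metric.sphere (0 : H) 1) := Metric.isClosed_sphere.measurableSet
  have := hsph.standardBorel
  let Φ : Metric.sphere (0 : H) 1 × ℝ → HalfSpaces H := fun p => mk p.1.1 p.2 (by simp)
  have hcoord (p : Metric.sphere (0 : H) 1 × ℝ) : coord (Φ p) = (p.1.1, p.2) :=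
    coord_eq (by simp) fun u => Iff.rfl
  have hΦ : MeasurableEmbedding Φ := by
    refine Measurable.measurableEmbedding ?_ ?_
    · refine measurable_of_measurableSet_mem hΩ fun v => ?_
      exact measurableSet_le (f := fun p : Metric.sphere (0 : H) 1 × ℝ => p.2)
        (g := fun p => ⟪v, p.1.1⟫) measurable_snd
        (by apply Continuous.measurable; fun_prop)
    · intro p q hpq
      have h := congrArg coord hpq
      rw [hcoord, hcoord, Prod.mk.injEq] at h
      exact Prod.ext (Subtype.ext h.1) h.2
  intro E hE
  have himage : coord ⁻¹' E = Φ '' ((fun p => (p.1.1, p.2)) ⁻¹' E) := by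
    ext M
    constructor
    · intro hM
      refine ⟨(⟨(coord M).1, by simp [norm_coord_fst]⟩, (coord M).2), hM, ext_val ?_⟩
      ext u
      exact (mem_iff M u).symm
    · rintro ⟨p, hp, rfl⟩
      rw [mem_preimage, hcoord]
      exact hp
  rw [himage]
  refine hΦ.measurableSet_image.2 ?_
  exact (measurable_subtype_coe.comp measurable_fst).prodMk measurable_snd hE

theorem isCoordHalfSpaceMeasure_map_coord {μ : Measure (HalfSpaces H)}
    (hμ : IsHalfSpaceMeasure H μ) : IsCoordHalfSpaceMeasure (μ.map coord) := by
  obtain ⟨hΩ, hinv, hsep⟩ := hμ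
  have hc := measurable_coord hΩ
  have hmap (φ : H ≃ᵢ H) : μ.map (image φ) = μ := by
    ext A hA
    rw [Measure.map_apply (measurable_image hΩ φ) hA, ← setOf_image_mem, hinv φ A hA]
  have hpush (φ : H ≃ᵢ H) {g : H × ℝ → H × ℝ} (hg : Measurable g)
      (h : ∀ M : HalfSpaces H, coord (image φ M) = g (coord M)) :
      (μ.map coord).map g = μ.map coord := by
    rw [Measure.map_map hg hc]
    conv_rhs => rw [← hmap φ, Measure.map_map hc (measurable_image hΩ φ)]
    congr 1
    ext1 M
    exact (h M).symm
  refine ⟨?_, fun A => ?_, fun v => ?_, fun v w => ?_⟩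
  · rw [ae_map_iff hc.aemeasurable
      (measurableSet_eq_fun measurable_fst.norm measurable_const)]
    exact ae_of_all _ norm_coord_fst
  · refine hpush A.toIsometryEquiv (A.continuous.measurable.prodMap measurable_id) fun M => ?_
    rw [coord_image]
    simp [Prod.map]
  · refine hpush (IsometryEquiv.addRight v) ?_ fun M => ?_
    · apply Continuous.measurable
      fun_prop
    · rw [coord_image]
      simp
  · rw [Measure.map_apply hc, ← hsep v w]
    · congr 1
      ext M
      simp [mem_iff]
    · refine (measurableSet_le measurable_snd ?_).inter (measurableSet_lt ?_ measurable_snd) <;>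
      · apply Continuous.measurable
        fun_prop

end Coordinates

end HalfSpaces

/-- A half-space measure is unique. -/
theorem IsHalfSpaceMeasure.unique {H : Type*} [NormedAddCommGroup H] [InnerProductSpace ℝ H]
    [FiniteDimensional ℝ H] [MeasurableSpace (HalfSpaces H)] {μ ν : Measure (HalfSpaces H)}
    (hμ : IsHalfSpaceMeasure H μ) (hν : IsHalfSpaceMeasure H ν) : μ = ν := by
  borelize H
  have hc := HalfSpaces.measurable_coord hμ.1
  have h := (HalfSpaces.isCoordHalfSpaceMeasure_map_coord hμ).unique
    (HalfSpaces.isCoordHalfSpaceMeasure_map_coord hν)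
  ext E hE
  obtain ⟨F, hF, rfl⟩ := HalfSpaces.exists_preimage_coord hμ.1 hE
  rw [← Measure.map_apply hc hF, h, Measure.map_apply hc hF]

section Restriction

variable {H K : Type*} [NormedAddCommGroup H] [InnerProductSpace ℝ H]
  [NormedAddCommGroup K] [InnerProductSpace ℝ K]

/-- Rigid motions of a subspace extend to the ambient space. -/
theorem LinearIsometry.exists_isometryEquiv_extension [FiniteDimensional ℝ K]
    (ι : H →ₗᵢ[ℝ] K) (φ : H ≃ᵢ H) :
    ∃ φ' : K ≃ᵢ K, ∀ u, φ' (ι u) = ι (φ u) := by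
  let L : LinearMap.range ι.toLinearMap →ₗᵢ[ℝ] K :=
    (ι.comp φ.toRealLinearIsometryEquiv.toLinearIsometry).comp
      ι.equivRange.symm.toLinearIsometry
  let A : K ≃ₗᵢ[ℝ] K := L.extend.toLinearIsometryEquiv rfl
  refine ⟨A.toIsometryEquiv.trans (IsometryEquiv.addRight (ι (φ 0))), fun u => ?_⟩
  have hA : A (ι u) = ι (φ.toRealLinearIsometryEquiv u) := by
    have h := L.extend_apply (ι.equivRange u)
    have h2 : L (ι.equivRange u) = ι (φ.toRealLinearIsometryEquiv u) := by
      change ι (φ.toRealLinearIsometryEquiv (ι.equivRange.symm (ι.equivRange u))) = _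
      rw [LinearIsometryEquiv.symm_apply_apply]
    exact h.trans h2
  rw [HalfSpaces.apply_eq_toRealLinearIsometryEquiv_add φ u, map_add, ← hA]
  rfl

namespace HalfSpaces

/-- The half-spaces of the ambient space that meet the subspace in a half-space. -/
def cutting (ι : H →ₗᵢ[ℝ] K) : Set (HalfSpaces K) :=
  {N | ∃ M : HalfSpaces H, M.1 = ι ⁻¹' N.1}

noncomputable def trace (ι : H →ₗᵢ[ℝ] K) (N : cutting ι) : HalfSpaces H :=
  N.2.choose

theorem trace_val (ι : H →ₗᵢ[ℝ] K) (N : cutting ι) : (trace ι N).1 = ι ⁻¹' N.1.1 :=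
  N.2.choose_spec

theorem val_image_preimage_trace (ι : H →ₗᵢ[ℝ] K) (E : Set (HalfSpaces H)) :
    Subtype.val '' (trace ι ⁻¹' E) = {N : HalfSpaces K | ι ⁻¹' N.1 ∈ Subtype.val '' E} := by
  ext N
  constructor
  · rintro ⟨N', hN', rfl⟩
    exact ⟨_, hN', trace_val ι N'⟩
  · rintro ⟨M, hM, h⟩
    have hN : N ∈ cutting ι := ⟨M, h⟩
    refine ⟨⟨N, hN⟩, ?_, rfl⟩
    have htrace : trace ι ⟨N, hN⟩ = M := ext_val ((trace_val ι _).trans h.symm)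
    rw [mem_preimage, htrace]
    exact hM

theorem measurable_trace [mΩ : MeasurableSpace (HalfSpaces H)]
    [mΩ' : MeasurableSpace (HalfSpaces K)]
    (hΩ : mΩ = MeasurableSpace.generateFrom {A | ∃ v : H, A = {M : HalfSpaces H | v ∈ M.1}})
    (hΩ' : mΩ' = MeasurableSpace.generateFrom {A | ∃ v : K, A = {M : HalfSpaces K | v ∈ M.1}})
    (ι : H →ₗᵢ[ℝ] K) : Measurable (trace ι) := by
  refine measurable_of_measurableSet_mem hΩ fun v => ?_
  convert measurable_subtype_coe (measurableSet_mem hΩ' (ι v)) using 1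
  ext N
  exact Set.ext_iff.1 (trace_val ι N) v

variable [FiniteDimensional ℝ H] [FiniteDimensional ℝ K]

/-- The trace of a half-space on a subspace is a half-space as soon as it is neither empty nor
everything. -/
theorem exists_val_eq_preimage (ι : H →ₗᵢ[ℝ] K) (N : HalfSpaces K) {v w : H}
    (hv : ι v ∈ N.1) (hw : ι w ∉ N.1) : ∃ M : HalfSpaces H, M.1 = ι ⁻¹' N.1 := by
  let η : H := LinearMap.adjoint ι.toLinearMap (coord N).1
  have hη (u : H) : ⟪ι u, (coord N).1⟫ = ⟪u, η⟫ :=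
    (LinearMap.adjoint_inner_right ι.toLinearMap u (coord N).1).symm
  rw [mem_iff, hη] at hv hw
  have hη0 : η ≠ 0 := by
    intro h0
    rw [h0, inner_zero_right] at hv hw
    exact hw hv
  have hpos : 0 < ‖η‖ := norm_pos_iff.2 hη0
  refine ⟨mk (‖η‖⁻¹ • η) (‖η‖⁻¹ * (coord N).2) (by simp [norm_smul, hpos.ne']), ?_⟩
  ext u
  change ‖η‖⁻¹ * (coord N).2 ≤ ⟪u, ‖η‖⁻¹ • η⟫ ↔ ι u ∈ N.1
  rw [mem_iff, hη, inner_smul_right, mul_le_mul_iff_right₀ (inv_pos.2 hpos)]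

theorem measurableSet_cutting [mΩ' : MeasurableSpace (HalfSpaces K)]
    (hΩ' : mΩ' = MeasurableSpace.generateFrom {A | ∃ v : K, A = {M : HalfSpaces K | v ∈ M.1}})
    (ι : H →ₗᵢ[ℝ] K) : MeasurableSet (cutting ι) := by
  obtain ⟨D, hDc, hD⟩ := TopologicalSpace.exists_countable_dense H
  have : cutting ι = ⋃ d ∈ D, ⋃ e ∈ D,
      {N : HalfSpaces K | ι d ∈ N.1} ∩ {N : HalfSpaces K | ι e ∈ N.1}ᶜ := by
    ext N
    simp only [mem_iUnion]
    constructor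
    · rintro ⟨M, hM⟩
      obtain ⟨d, hdD, -, hd⟩ := exists_mem_dense M hD isOpen_univ (mem_univ _) M.coord_smul_mem
      obtain ⟨e, he, heD⟩ := hD.inter_open_nonempty _ M.isClosed.isOpen_compl M.exists_not_mem
      rw [hM] at hd he
      exact ⟨d, hdD, e, heD, hd, he⟩
    · rintro ⟨d, -, e, -, hd, he⟩
      exact exists_val_eq_preimage ι N hd he
  rw [this]
  exact MeasurableSet.biUnion hDc fun d _ => MeasurableSet.biUnion hDc fun e _ =>
    (measurableSet_mem hΩ' _).inter (measurableSet_mem hΩ' _).compl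

end HalfSpaces

end Restriction

/-- For `ℋ ⊆ ℋ'`, the pushforward `ν` of `μ'` along `M' ↦ M' ∩ ℋ` is
invariant under rigid motions of `ℋ`, has the right normalization, and hence equals `μ`. -/
theorem pushforward_halfspace_measure_eq
    (H : Type*) [NormedAddCommGroup H] [InnerProductSpace ℝ H] [FiniteDimensional ℝ H]
    (H' : Type*) [NormedAddCommGroup H'] [InnerProductSpace ℝ H'] [FiniteDimensional ℝ H']
    (ι : H →ₗᵢ[ℝ] H')
    [MeasurableSpace (HalfSpaces H)] [MeasurableSpace (HalfSpaces H')]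
    (μ : Measure (HalfSpaces H)) (μ' : Measure (HalfSpaces H'))
    (hμ : IsHalfSpaceMeasure H μ) (hμ' : IsHalfSpaceMeasure H' μ') :
    ∃ ν : Measure (HalfSpaces H),
      (∀ E : Set (HalfSpaces H), MeasurableSet E →
        ν E = μ' {M' : HalfSpaces H' | ⇑ι ⁻¹' M'.1 ∈ Subtype.val '' E}) ∧
      (∀ (φ : H ≃ᵢ H) (A : Set (HalfSpaces H)), MeasurableSet A →
        ν {M : HalfSpaces H | ⇑φ '' M.1 ∈ Subtype.val '' A} = ν A) ∧
      (∀ v w : H, ν {M : HalfSpaces H | v ∈ M.1 ∧ w ∉ M.1} = ENNReal.ofReal ‖v - w‖) ∧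
      ν = μ := by
  obtain ⟨hΩ, -, -⟩ := id hμ
  obtain ⟨hΩ', hinv', hsep'⟩ := id hμ'
  let ν : Measure (HalfSpaces H) :=
    (μ'.comap (Subtype.val : HalfSpaces.cutting ι → HalfSpaces H')).map (HalfSpaces.trace ι)
  have hemb : MeasurableEmbedding (Subtype.val : HalfSpaces.cutting ι → HalfSpaces H') :=
    MeasurableEmbedding.subtype_coe (HalfSpaces.measurableSet_cutting hΩ' ι)
  have htrace := HalfSpaces.measurable_trace hΩ hΩ' ι
  have hν (E : Set (HalfSpaces H)) (hE : MeasurableSet E) :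
      ν E = μ' {M' : HalfSpaces H' | ι ⁻¹' M'.1 ∈ Subtype.val '' E} := by
    rw [Measure.map_apply htrace hE, hemb.comap_apply, HalfSpaces.val_image_preimage_trace]
  have hmeas (E : Set (HalfSpaces H)) (hE : MeasurableSet E) :
      MeasurableSet {M' : HalfSpaces H' | ι ⁻¹' M'.1 ∈ Subtype.val '' E} := by
    rw [← HalfSpaces.val_image_preimage_trace]
    exact hemb.measurableSet_image.2 (htrace hE)
  have hinv (φ : H ≃ᵢ H) (A : Set (HalfSpaces H)) (hA : MeasurableSet A) :
      ν {M : HalfSpaces H | φ '' M.1 ∈ Subtype.val '' A} = ν A := by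
    obtain ⟨φ', hφ'⟩ := ι.exists_isometryEquiv_extension φ
    rw [hν A hA, ← hinv' φ' _ (hmeas A hA), HalfSpaces.setOf_image_mem,
      hν _ (HalfSpaces.measurable_image hΩ φ hA), HalfSpaces.setOf_image_mem]
    congr 1
    ext M'
    have hpre : ι ⁻¹' (HalfSpaces.image φ' M').1 = φ '' (ι ⁻¹' M'.1) := by
      ext u
      obtain ⟨w, rfl⟩ := φ.surjective u
      rw [φ.injective.mem_set_image, mem_preimage, ← hφ']
      exact φ'.injective.mem_set_image
    change ι ⁻¹' M'.1 ∈ Subtype.val '' (HalfSpaces.image φ ⁻¹' A) ↔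
      ι ⁻¹' (HalfSpaces.image φ' M').1 ∈ Subtype.val '' A
    rw [hpre]
    constructor
    · rintro ⟨M, hM, h⟩
      exact ⟨HalfSpaces.image φ M, hM, congrArg (φ '' ·) h⟩
    · rintro ⟨N, hN, h⟩
      have hN' : (HalfSpaces.image φ.symm N).1 = ι ⁻¹' M'.1 := by
        change φ.symm '' N.1 = _
        rw [h, ← image_comp]
        simp
      refine ⟨HalfSpaces.image φ.symm N, ?_, hN'⟩
      have : HalfSpaces.image φ (HalfSpaces.image φ.symm N) = N :=
        HalfSpaces.ext_val ((congrArg (φ '' ·) hN').trans h.symm)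
      change HalfSpaces.image φ (HalfSpaces.image φ.symm N) ∈ A
      rw [this]
      exact hN
  have hsep (v w : H) :
      ν {M : HalfSpaces H | v ∈ M.1 ∧ w ∉ M.1} = ENNReal.ofReal ‖v - w‖ := by
    have hvw : MeasurableSet {M : HalfSpaces H | v ∈ M.1 ∧ w ∉ M.1} :=
      (HalfSpaces.measurableSet_mem hΩ v).inter (HalfSpaces.measurableSet_mem hΩ w).compl
    rw [hν _ hvw, ← ι.norm_map, map_sub, ← hsep']
    congr 1
    ext M'
    constructor
    · rintro ⟨M, ⟨hv, hw⟩, h⟩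
      rw [h] at hv hw
      exact ⟨hv, hw⟩
    · rintro ⟨hv, hw⟩
      obtain ⟨M, hM⟩ := HalfSpaces.exists_val_eq_preimage ι M' hv hw
      refine ⟨M, ⟨?_, ?_⟩, hM⟩
      · rw [hM]
        exact hv
      · rw [hM]
        exact hw
  exact ⟨ν, hν, hinv, hsep, IsHalfSpaceMeasure.unique ⟨hΩ, hinv, hsep⟩ hμ⟩
end

section
/- Let Γ be a countable group. If for every measure-preserving action of Γ on a measure space (Ω,𝓑,μ) and every S ∈ 𝓑 with μ(S △ gS) < ∞ for all g ∈ Γ one has sup_{g∈Γ} μ(S △ gS) < ∞, then every left Γ-invariant negative definite kernel on Γ is bounded (hence Γ has property (T)). -/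
open MeasureTheory
open scoped symmDiff ENNReal

open ProbabilityTheory InnerProductSpace
open scoped RealInnerProductSpace

/-- Parseval's identity for the (possibly degenerate) Gram–Schmidt system of a sequence. -/
theorem sum_sq_inner_gramSchmidtNormed {E : Type*} [NormedAddCommGroup E] [InnerProductSpace ℝ E]
    (v : ℕ → E) (N : ℕ) {u : E} (hu : u ∈ Submodule.span ℝ (v '' Set.Iio N)) :
    ∑ k ∈ Finset.range N, ⟪gramSchmidtNormed ℝ v k, u⟫ ^ 2 = ‖u‖ ^ 2 := by
  set e := gramSchmidtNormed ℝ v with he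
  have horth : ∀ i j, i ≠ j → ⟪e i, e j⟫ = 0 := fun i j hij ↦ by
    simp [he, gramSchmidtNormed, inner_smul_left, inner_smul_right, gramSchmidt_orthogonal ℝ v hij]
  have hself : ∀ j, ⟪e j, e j⟫ • e j = e j := fun j ↦ by
    by_cases hj : e j = 0
    · simp [hj]
    · rw [real_inner_self_eq_norm_sq, gramSchmidtNormed_unit_length' hj]
      simp
  have hexp : ∑ k ∈ Finset.range N, ⟪e k, u⟫ • e k = u := by
    rw [← span_gramSchmidt_Iio, ← span_gramSchmidtNormed] at hu
    induction hu using Submodule.span_induction with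
    | mem x hx =>
      obtain ⟨j, hj, rfl⟩ := hx
      rw [Finset.sum_eq_single j, hself j]
      · intro k _ hkj
        rw [horth k j hkj, zero_smul]
      · intro h
        exact absurd (Finset.mem_range.2 hj) h
    | zero => simp
    | add x y _ _ hx hy =>
      simp only [inner_add_right, add_smul, Finset.sum_add_distrib, hx, hy]
    | smul a x _ hx =>
      simp only [inner_smul_right, mul_smul, ← Finset.smul_sum, hx]
  have hinner := congrArg (fun w ↦ ⟪w, u⟫) hexp
  simp only [sum_inner, real_inner_smul_left, ← sq] at hinner
  rw [hinner, real_inner_self_eq_norm_sq]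

/-- A finite linear combination of independent standard Gaussians is Gaussian. -/
theorem map_sum_mul_infinitePi_gaussianReal (s : Finset ℕ) (c : ℕ → ℝ) :
    (Measure.infinitePi fun _ : ℕ ↦ gaussianReal 0 1).map (fun ω ↦ ∑ k ∈ s, c k * ω k) =
      gaussianReal 0 (∑ k ∈ s, c k ^ 2).toNNReal := by
  apply Measure.ext_of_charFun
  have hmeas : ∀ k, Measurable fun ω : ℕ → ℝ ↦ c k * ω k := fun k ↦ by fun_prop
  have hind : iIndepFun (fun k (ω : ℕ → ℝ) ↦ c k * ω k)
      (Measure.infinitePi fun _ : ℕ ↦ gaussianReal 0 1) :=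
    iIndepFun_infinitePi (X := fun k x ↦ c k * x) fun _ ↦ by fun_prop
  rw [iIndepFun.charFun_map_fun_finsetSum_eq_prod (X := fun k (ω : ℕ → ℝ) ↦ c k * ω k)
    (fun k _ ↦ (hmeas k).aemeasurable) (hind.restrict s)]
  have hlaw : ∀ k, (Measure.infinitePi fun _ : ℕ ↦ gaussianReal 0 1).map
      (fun ω : ℕ → ℝ ↦ c k * ω k) = gaussianReal 0 (c k ^ 2).toNNReal := fun k ↦ by
    have := gaussianReal_map_const_mul (μ := 0) (v := 1) (c k)
    rw [← Measure.infinitePi_map_eval (fun _ : ℕ ↦ gaussianReal 0 1) k,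
      Measure.map_map (by fun_prop) (by fun_prop)] at this
    simp only [Function.comp_def, mul_zero, mul_one] at this
    rw [this]
    congr 1
    ext
    simp [sq_nonneg]
  ext t
  simp only [Finset.prod_apply, hlaw, charFun_gaussianReal]
  rw [← Complex.exp_sum]
  congr 1
  rw [Real.coe_toNNReal _ (Finset.sum_nonneg fun k _ ↦ sq_nonneg (c k))]
  simp [sq_nonneg, Finset.sum_mul, Finset.sum_div]

/-- The isonormal Gaussian process indexed by a countable family of vectors. -/
theorem exists_gaussian_process_of_vectors {ι E : Type*} [Countable ι] [Nonempty ι]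
    [NormedAddCommGroup E] [InnerProductSpace ℝ E] (b : ι → E) :
    ∃ X : ι → (ℕ → ℝ) → ℝ, (∀ i, Measurable (X i)) ∧
      ∀ (κ : Type) [Fintype κ] (x : κ → ι) (c : κ → ℝ),
        (Measure.infinitePi fun _ : ℕ ↦ gaussianReal 0 1).map (fun ω ↦ ∑ i, c i * X (x i) ω) =
          gaussianReal 0 (‖∑ i, c i • b (x i)‖ ^ 2).toNNReal := by
  obtain ⟨v, hv⟩ := exists_surjective_nat ι
  choose m hm using hv
  set e := gramSchmidtNormed ℝ (b ∘ v) with he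
  refine ⟨fun x ω ↦ ∑ k ∈ Finset.range (m x + 1), ⟪e k, b x⟫ * ω k, fun x ↦ by fun_prop, ?_⟩
  intro κ _ x c
  set N := Finset.univ.sup fun i ↦ m (x i) + 1
  have hle : ∀ i, m (x i) + 1 ≤ N := fun i ↦
    Finset.le_sup (f := fun i ↦ m (x i) + 1) (Finset.mem_univ i)
  have hext : ∀ i (ω : ℕ → ℝ), ∑ k ∈ Finset.range (m (x i) + 1), ⟪e k, b (x i)⟫ * ω k =
      ∑ k ∈ Finset.range N, ⟪e k, b (x i)⟫ * ω k := fun i ω ↦ by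
    refine Finset.sum_subset (Finset.range_mono (hle i)) fun k _ hk ↦ ?_
    have hlt : m (x i) < k := by simpa using hk
    have := gramSchmidt_inv_triangular ℝ (b ∘ v) hlt
    rw [Function.comp_apply, hm] at this
    simp [he, gramSchmidtNormed, inner_smul_left, this]
  have hsum : (fun ω : ℕ → ℝ ↦ ∑ i, c i * ∑ k ∈ Finset.range (m (x i) + 1), ⟪e k, b (x i)⟫ * ω k) =
      fun ω ↦ ∑ k ∈ Finset.range N, ⟪e k, ∑ i, c i • b (x i)⟫ * ω k := by
    ext ω
    simp only [hext, inner_sum, inner_smul_right, Finset.sum_mul, Finset.mul_sum, mul_assoc]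
    exact Finset.sum_comm
  rw [hsum, map_sum_mul_infinitePi_gaussianReal, he, sum_sq_inner_gramSchmidtNormed]
  refine Submodule.sum_mem _ fun i _ ↦ Submodule.smul_mem _ _ (Submodule.subset_span ?_)
  exact ⟨m (x i), hle i, by simp [hm]⟩

/-- Kernels of positive type are Gram kernels. -/
theorem exists_inner_eq_of_posSemidef {X : Type} (K : X → X → ℝ) (hsymm : ∀ x y, K x y = K y x)
    (hpos : ∀ (s : Finset X) (c : X → ℝ), 0 ≤ ∑ i ∈ s, ∑ j ∈ s, c i * c j * K i j) :
    ∃ (E : Type) (_ : NormedAddCommGroup E) (_ : InnerProductSpace ℝ E) (b : X → E),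
      ∀ x y, ⟪b x, b y⟫ = K x y := by
  let K' : Matrix X X (ℝ →L[ℝ] ℝ) := .of fun x y ↦ K x y • ContinuousLinearMap.id ℝ ℝ
  have hK' : K'.PosSemidef := by
    have htfae := (RKHS.posSemidef_tfae (𝕜 := ℝ) (K := K')).out 0 2
    refine htfae.2 ⟨?_, fun c ↦ ?_⟩
    · ext x y
      simp [Matrix.conjTranspose_apply, K', hsymm x y, ← ContinuousLinearMap.one_def]
    · refine (hpos c.support c).trans_eq ?_
      simp only [Finsupp.sum, K', RCLike.re_to_real]
      refine Finset.sum_congr rfl fun i _ ↦ Finset.sum_congr rfl fun j _ ↦ ?_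
      simp [hsymm i j]
      ring
  have : Fact K'.PosSemidef := ⟨hK'⟩
  refine ⟨RKHS.OfKernel K', inferInstance, inferInstance,
    fun x ↦ RKHS.kerFun (RKHS.OfKernel K') x (1 : ℝ), fun x y ↦ ?_⟩
  rw [← RKHS.kernel_inner, RKHS.OfKernel.kernel_ofKernel]
  simp [K', hsymm x y]

/-- A kernel conditionally of negative type is the variance of the increments of a Gaussian
process. -/
theorem exists_gaussian_process_of_negDef {X : Type} [Countable X] [Nonempty X] (f : X → X → ℝ)
    (hdiag : ∀ x, f x x = 0) (hsymm : ∀ x y, f x y = f y x)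
    (hneg : ∀ (n : ℕ) (x : Fin n → X) (c : Fin n → ℝ), (∑ i, c i = 0) →
      ∑ i, ∑ j, c i * c j * f (x i) (x j) ≤ 0) :
    ∃ Z : X → (ℕ → ℝ) → ℝ, (∀ x, Measurable (Z x)) ∧
      ∀ (κ : Type) [Fintype κ] (x : κ → X) (c : κ → ℝ), ∑ i, c i = 0 →
        (Measure.infinitePi fun _ : ℕ ↦ gaussianReal 0 1).map (fun ω ↦ ∑ i, c i * Z (x i) ω) =
          gaussianReal 0 (-(∑ i, ∑ j, c i * c j * f (x i) (x j)) / 2).toNNReal := by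
  classical
  obtain ⟨o⟩ := ‹Nonempty X›
  have hneg' : ∀ (κ : Type) [Fintype κ] (x : κ → X) (c : κ → ℝ), ∑ i, c i = 0 →
      ∑ i, ∑ j, c i * c j * f (x i) (x j) ≤ 0 := fun κ _ x c hc ↦ by
    let e := (Fintype.equivFin κ).symm
    have := hneg (Fintype.card κ) (x ∘ e) (c ∘ e) (by simpa [e.sum_comp] using hc)
    simp only [Function.comp_apply] at this
    rw [← e.sum_comp]
    simpa only [← e.sum_comp (fun j ↦ c (e _) * c j * f (x (e _)) (x j))] using this
  have hquad : ∀ (κ : Type) [Fintype κ] (x : κ → X) (c : κ → ℝ),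
      ∑ i, ∑ j, c i * c j * ((f (x i) o + f o (x j) - f (x i) (x j)) / 2) =
        (∑ i, c i) * (∑ i, c i * f (x i) o) - (∑ i, ∑ j, c i * c j * f (x i) (x j)) / 2 := by
    intro κ _ x c
    have h1 : ∑ i, ∑ j, c i * c j * f (x i) o = (∑ i, c i) * ∑ i, c i * f (x i) o := by
      rw [Finset.sum_mul_sum, Finset.sum_comm]
      exact Finset.sum_congr rfl fun i _ ↦ Finset.sum_congr rfl fun j _ ↦ by ring
    have h2 : ∑ i, ∑ j, c i * c j * f o (x j) = (∑ i, c i) * ∑ i, c i * f (x i) o := by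
      rw [Finset.sum_mul_sum]
      exact Finset.sum_congr rfl fun i _ ↦ Finset.sum_congr rfl fun j _ ↦ by
        rw [hsymm o]; ring
    have h3 : ∀ i j, c i * c j * ((f (x i) o + f o (x j) - f (x i) (x j)) / 2) =
        (c i * c j * f (x i) o + c i * c j * f o (x j) - c i * c j * f (x i) (x j)) / 2 :=
      fun i j ↦ by ring
    simp only [h3, ← Finset.sum_div, Finset.sum_sub_distrib, Finset.sum_add_distrib, h1, h2]
    ring
  obtain ⟨E, _, _, b, hb⟩ := exists_inner_eq_of_posSemidef
    (fun x y ↦ (f x o + f o y - f x y) / 2)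
    (fun x y ↦ by rw [hsymm x o, hsymm o y, hsymm x y]; ring)
    (fun s c ↦ by
      have hsum : ∀ F : X → X → ℝ, ∑ i ∈ s, ∑ j ∈ s, F i j = ∑ i : s, ∑ j : s, F i j := fun F ↦ by
        rw [← Finset.sum_coe_sort]
        exact Finset.sum_congr rfl fun i _ ↦ (Finset.sum_coe_sort s _).symm
      rw [hsum, hquad s (fun i ↦ i) (fun i ↦ c i)]
      have hopt := hneg' (Option s) (fun i ↦ i.elim o (fun i ↦ i))
        (fun i ↦ i.elim (-∑ i : s, c i) (fun i ↦ c i)) (by simp [Fintype.sum_option])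
      simp only [Fintype.sum_option, Option.elim, hdiag, Finset.sum_add_distrib] at hopt
      generalize ∑ i : s, c i = σ at hopt ⊢
      have h1 : ∑ i : s, -σ * c i * f o i = -(σ * ∑ i : s, c i * f i o) := by
        rw [Finset.mul_sum, ← Finset.sum_neg_distrib]
        exact Finset.sum_congr rfl fun i _ ↦ by rw [hsymm o]; ring
      have h2 : ∑ i : s, c i * -σ * f i o = -(σ * ∑ i : s, c i * f i o) := by
        rw [Finset.mul_sum, ← Finset.sum_neg_distrib]
        exact Finset.sum_congr rfl fun i _ ↦ by ring
      rw [h1, h2] at hopt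
      linarith)
  obtain ⟨Z, hZ, hlaw⟩ := exists_gaussian_process_of_vectors b
  refine ⟨Z, hZ, fun κ _ x c hc ↦ ?_⟩
  rw [hlaw κ x c, ← real_inner_self_eq_norm_sq]
  congr 2
  have := hquad κ x c
  rw [hc, zero_mul, zero_sub] at this
  rw [neg_div, ← this]
  simp only [sum_inner, inner_sum, real_inner_smul_left, real_inner_smul_right, hb]
  exact Finset.sum_congr rfl fun i _ ↦ Finset.sum_congr rfl fun j _ ↦ by
    rw [hsymm (x j) o, hsymm o (x i), hsymm (x j) (x i)]; ring

/-- Two real processes all of whose finite linear combinations agree in law agree in law. -/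
theorem map_eq_of_map_sum_mul_eq {ι Ω : Type*} {_ : MeasurableSpace Ω} {P : Measure Ω}
    [IsFiniteMeasure P] {X Y : ι → Ω → ℝ} (hX : ∀ i, Measurable (X i)) (hY : ∀ i, Measurable (Y i))
    (h : ∀ (I : Finset ι) (c : I → ℝ),
      P.map (fun ω ↦ ∑ i, c i * X i ω) = P.map (fun ω ↦ ∑ i, c i * Y i ω)) :
    P.map (fun ω i ↦ X i ω) = P.map (fun ω i ↦ Y i ω) := by
  classical
  rw [map_eq_iff_forall_finset_map_restrict_eq (measurable_pi_lambda _ hX).aemeasurable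
    (measurable_pi_lambda _ hY).aemeasurable]
  intro I
  refine Measure.ext_of_charFunDual (funext fun L ↦ ?_)
  have hL : ∀ w : I → ℝ, L w = ∑ i, L (Pi.single i 1) * w i := fun w ↦ by
    conv_lhs => rw [← Finset.univ_sum_single w, map_sum]
    refine Finset.sum_congr rfl fun i _ ↦ ?_
    rw [mul_comm, ← smul_eq_mul, ← map_smul, ← Pi.single_smul, smul_eq_mul, mul_one]
  rw [charFunDual_eq_charFun_map_one, charFunDual_eq_charFun_map_one,
    Measure.map_map (by fun_prop) (by fun_prop), Measure.map_map (by fun_prop) (by fun_prop)]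
  have hcomb := h I fun i ↦ L (Pi.single i 1)
  have hcomp : ∀ W : ι → Ω → ℝ, (L ∘ fun ω ↦ I.restrict (W · ω)) =
      fun ω ↦ ∑ i : I, L (Pi.single i 1) * W i ω := fun W ↦ funext fun ω ↦ hL _
  rw [hcomp, hcomp, hcomb]

/-- Adding an independent real distributed according to Lebesgue measure to a process yields a
measure which only depends on the law of the increments of the process. -/
theorem map_add_volume_eq_map_add_volume {ι Ω : Type*} {_ : MeasurableSpace Ω} {P : Measure Ω}
    [IsFiniteMeasure P] {X Y : ι → Ω → ℝ} {U V : Ω → ℝ} (hX : ∀ i, Measurable (X i))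
    (hY : ∀ i, Measurable (Y i)) (hU : Measurable U) (hV : Measurable V)
    (h : P.map (fun ω i ↦ X i ω - U ω) = P.map (fun ω i ↦ Y i ω - V ω)) :
    (P.prod volume).map (fun p : Ω × ℝ ↦ fun i ↦ X i p.1 + p.2) =
      (P.prod volume).map (fun p : Ω × ℝ ↦ fun i ↦ Y i p.1 + p.2) := by
  have key : ∀ {X : ι → Ω → ℝ} {U : Ω → ℝ}, (∀ i, Measurable (X i)) → Measurable U →
      (P.prod volume).map (fun p : Ω × ℝ ↦ fun i ↦ X i p.1 + p.2) =
        ((P.map (fun ω i ↦ X i ω - U ω)).prod volume).map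
          (fun p : (ι → ℝ) × ℝ ↦ fun i ↦ p.1 i + p.2) := by
    intro X U hX hU
    have hmp : MeasurePreserving (fun p : Ω × ℝ ↦ ((fun i ↦ X i p.1 - U p.1), U p.1 + p.2))
        (P.prod volume) ((P.map (fun ω i ↦ X i ω - U ω)).prod volume) := by
      refine MeasurePreserving.skew_product (g := fun ω t ↦ U ω + t)
        (f := fun ω i ↦ X i ω - U ω) ⟨by fun_prop, rfl⟩ (by fun_prop) (.of_forall fun ω ↦ ?_)
      exact map_add_left_eq_self volume (U ω)
    rw [← hmp.map_eq, Measure.map_map (by fun_prop) (by fun_prop)]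
    congr 1
    ext p i
    simp only [Function.comp_apply]
    ring
  rw [key hX hU, key hY hV, h]

theorem volume_pos_add_symmDiff_pos_add (u v : ℝ) :
    volume ({t : ℝ | 0 < u + t} ∆ {t : ℝ | 0 < v + t}) = ‖u - v‖ₑ := by
  have key : ∀ u v : ℝ, u ≤ v →
      volume ({t : ℝ | 0 < u + t} ∆ {t : ℝ | 0 < v + t}) = ‖u - v‖ₑ := fun u v huv ↦ by
    have : {t : ℝ | 0 < u + t} ∆ {t : ℝ | 0 < v + t} = Set.Ioc (-v) (-u) := by
      ext t
      simp only [Set.mem_symmDiff, Set.mem_ofPred_eq, Set.mem_Ioc, not_lt]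
      constructor
      · rintro (⟨h1, h2⟩ | ⟨h1, h2⟩) <;> constructor <;> linarith
      · rintro ⟨h1, h2⟩
        exact Or.inr ⟨by linarith, by linarith⟩
    rw [this, Real.volume_Ioc, enorm_sub_rev, Real.enorm_of_nonneg (by linarith)]
    congr 1
    ring
  rcases le_total u v with h | h
  · exact key u v h
  · rw [symmDiff_comm, enorm_sub_rev, key v u h]

theorem lintegral_enorm_gaussianReal {v : ℝ} (hv : 0 ≤ v) :
    ∫⁻ z, ‖z‖ₑ ∂(gaussianReal 0 v.toNNReal) =
      ENNReal.ofReal √v * ∫⁻ z, ‖z‖ₑ ∂(gaussianReal 0 1) := by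
  have hmap := gaussianReal_map_const_mul (μ := 0) (v := 1) √v
  have hvar : NNReal.mk (√v ^ 2) (sq_nonneg _) * 1 = v.toNNReal := by
    ext
    simp [Real.sq_sqrt hv, hv]
  rw [hvar, mul_zero] at hmap
  rw [← hmap, lintegral_map (by fun_prop) (by fun_prop), ← lintegral_const_mul _ (by fun_prop)]
  simp [enorm_mul, Real.enorm_of_nonneg]

theorem lintegral_enorm_gaussianReal_ne_top : ∫⁻ z, ‖z‖ₑ ∂(gaussianReal 0 1) ≠ ∞ :=
  ((memLp_id_gaussianReal (μ := 0) (v := 1) 1).integrable le_rfl).2.ne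

theorem lintegral_enorm_gaussianReal_ne_zero : ∫⁻ z, ‖z‖ₑ ∂(gaussianReal 0 1) ≠ 0 := by
  intro h
  rw [lintegral_eq_zero_iff (by fun_prop)] at h
  have h0 : ∀ᵐ z ∂(gaussianReal 0 1), z ≠ 0 := by
    have := nullSingletonClass_gaussianReal (μ := 0) (v := 1) one_ne_zero
    exact compl_mem_ae_iff.2 (measure_singleton 0)
  obtain ⟨z, hz, hz0⟩ := (h.and h0).exists
  exact hz0 (by simpa using hz)

/-- The shift-invariant measure on `Γ → ℝ` of a Gaussian process whose increments have variance
`f`, smeared along the constants, detects whether `f` is bounded. -/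
theorem invariant_negDef_bounded_of_type_zero (Γ : Type) [Group Γ] [Countable Γ]
    (hdyn : ∀ (Ω : Type) (_ : MeasurableSpace Ω) (μ : Measure Ω) (a : Γ → Ω → Ω),
      (∀ ω, a 1 ω = ω) →
      (∀ g h ω, a (g * h) ω = a g (a h ω)) →
      (∀ g, MeasurePreserving (a g) μ μ) →
      ∀ S : Set Ω, MeasurableSet S →
      (∀ g, μ (S ∆ (a g '' S)) ≠ ⊤) →
      ∃ C : ℝ≥0∞, C ≠ ⊤ ∧ ∀ g, μ (S ∆ (a g '' S)) ≤ C)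
    (f : Γ → Γ → ℝ) (hnonneg : ∀ x y, 0 ≤ f x y) (hinv : ∀ g x y, f (g * x) (g * y) = f x y)
    (hdiag : ∀ x, f x x = 0) (hsymm : ∀ x y, f x y = f y x)
    (hneg : ∀ (n : ℕ) (x : Fin n → Γ) (c : Fin n → ℝ), (∑ i, c i = 0) →
      ∑ i, ∑ j, c i * c j * f (x i) (x j) ≤ 0) :
    ∃ C : ℝ, ∀ x y, f x y ≤ C := by
  obtain ⟨Z, hZ, hlaw⟩ := exists_gaussian_process_of_negDef f hdiag hsymm hneg
  set P : Measure (ℕ → ℝ) := Measure.infinitePi fun _ : ℕ ↦ gaussianReal 0 1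
  let μ : Measure (Γ → ℝ) := (P.prod volume).map fun p x ↦ Z x p.1 + p.2
  let a : Γ → (Γ → ℝ) → Γ → ℝ := fun g w x ↦ w (g⁻¹ * x)
  have ha_meas : ∀ g, Measurable (a g) := fun g ↦
    measurable_pi_lambda _ fun x ↦ measurable_pi_apply _
  have hcomb : ∀ (g : Γ) (I : Finset Γ) (c : I → ℝ),
      P.map (fun ω ↦ ∑ i : I, c i * (Z (g * i) ω - Z g ω)) =
        P.map (fun ω ↦ ∑ i : I, c i * (Z i ω - Z 1 ω)) := by
    have key : ∀ (g : Γ) (I : Finset Γ) (c : I → ℝ),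
        P.map (fun ω ↦ ∑ i : I, c i * (Z (g * i) ω - Z g ω)) =
          P.map (fun ω ↦ ∑ i : Option I, (i.elim (-∑ i, c i) c : ℝ) *
            Z (g * i.elim 1 (fun i ↦ (i : Γ))) ω) := fun g I c ↦ by
      congr 1
      ext ω
      simp only [Fintype.sum_option, Option.elim, mul_one, mul_sub, Finset.sum_sub_distrib,
        ← Finset.sum_mul]
      ring
    intro g I c
    have h1 := key 1 I c
    simp only [one_mul] at h1
    rw [key, h1, hlaw _ (fun i : Option I ↦ g * i.elim 1 (fun i ↦ (i : Γ))) _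
        (by simp [Fintype.sum_option]),
      hlaw _ (fun i : Option I ↦ i.elim 1 (fun i ↦ (i : Γ))) _ (by simp [Fintype.sum_option])]
    simp only [hinv]
  have ha_mp : ∀ g, MeasurePreserving (a g) μ μ := fun g ↦ by
    refine ⟨ha_meas g, ?_⟩
    rw [Measure.map_map (ha_meas g) (by fun_prop)]
    exact map_add_volume_eq_map_add_volume (X := fun x ↦ Z (g⁻¹ * x)) (U := Z g⁻¹) (V := Z 1)
      (fun x ↦ hZ _) hZ (hZ _) (hZ _)
      (map_eq_of_map_sum_mul_eq (fun x ↦ (hZ _).sub (hZ _)) (fun x ↦ (hZ _).sub (hZ _))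
        (hcomb g⁻¹))
  let S : Set (Γ → ℝ) := {w | 0 < w 1}
  have hS : ∀ x : Γ, MeasurableSet {w : Γ → ℝ | 0 < w x} := fun x ↦
    measurableSet_lt measurable_const (measurable_pi_apply x)
  have ha_image : ∀ g, a g '' S = {w | 0 < w g} := fun g ↦ by
    ext w
    constructor
    · rintro ⟨w, hw, rfl⟩
      simpa [a, S] using hw
    · intro hw
      exact ⟨fun x ↦ w (g * x), by simpa [S] using hw, by ext x; simp [a]⟩
  have hμ : ∀ g, μ (S ∆ (a g '' S)) =
      ENNReal.ofReal √(f 1 g) * ∫⁻ z, ‖z‖ₑ ∂(gaussianReal 0 1) := fun g ↦ by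
    have hm := (hS 1).symmDiff (hS g)
    have hmeas : Measurable fun p : (ℕ → ℝ) × ℝ ↦ fun x ↦ Z x p.1 + p.2 := by fun_prop
    have hincr : P.map (fun ω ↦ Z 1 ω - Z g ω) = gaussianReal 0 (f 1 g).toNNReal := by
      have := hlaw (Fin 2) ![1, g] ![1, -1] (by simp)
      simp only [Fin.sum_univ_two, Matrix.cons_val_zero, Matrix.cons_val_one, hdiag,
        hsymm g 1] at this
      convert this using 2
      · ext ω
        ring
      · congr 1
        ring
    rw [ha_image, Measure.map_apply hmeas hm, Measure.prod_apply (hmeas hm),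
      ← lintegral_enorm_gaussianReal (hnonneg 1 g), ← hincr,
      lintegral_map (by fun_prop) (by fun_prop)]
    refine lintegral_congr fun ω ↦ ?_
    rw [← volume_pos_add_symmDiff_pos_add]
    congr 1
  obtain ⟨C, hC, hle⟩ := hdyn (Γ → ℝ) _ μ a (fun w ↦ by simp [a])
    (fun g h w ↦ by ext x; simp [a, mul_assoc]) ha_mp S (hS 1) fun g ↦ by
      rw [hμ]
      exact ENNReal.mul_ne_top ENNReal.ofReal_ne_top lintegral_enorm_gaussianReal_ne_top
  set M := ∫⁻ z, ‖z‖ₑ ∂(gaussianReal 0 1)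
  have hCM : C / M ≠ ∞ := ENNReal.div_ne_top hC lintegral_enorm_gaussianReal_ne_zero
  refine ⟨(C / M).toReal ^ 2, fun x y ↦ ?_⟩
  have hb : ENNReal.ofReal √(f 1 (x⁻¹ * y)) ≤ C / M := by
    rw [ENNReal.le_div_iff_mul_le (Or.inl lintegral_enorm_gaussianReal_ne_zero)
      (Or.inl lintegral_enorm_gaussianReal_ne_top), ← hμ]
    exact hle _
  have := (ENNReal.ofReal_le_iff_le_toReal hCM).1 hb
  rw [← hinv x⁻¹ x y, inv_mul_cancel]
  exact (Real.sqrt_le_left ENNReal.toReal_nonneg).1 this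

/-- If for every measure-preserving action of the countable group `Γ` and
every set `S` with `μ(S ∆ gS) < ∞` for all `g` the quantities `μ(S ∆ gS)` are uniformly
bounded, then every left `Γ`-invariant negative definite kernel on `Γ` is bounded
(hence `Γ` has property (T)). -/
theorem uniform_bound_implies_invariant_negdef_kernels_bounded
    (Γ : Type*) [Group Γ] [Countable Γ]
    (hdyn : ∀ (Ω : Type) (_ : MeasurableSpace Ω) (μ : Measure Ω) (a : Γ → Ω → Ω),
      (∀ ω, a 1 ω = ω) →
      (∀ g h ω, a (g * h) ω = a g (a h ω)) →
      (∀ g, MeasurePreserving (a g) μ μ) →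
      ∀ S : Set Ω, MeasurableSet S →
      (∀ g, μ (S ∆ (a g '' S)) ≠ ⊤) →
      ∃ C : ℝ≥0∞, C ≠ ⊤ ∧ ∀ g, μ (S ∆ (a g '' S)) ≤ C) :
    ∀ f : Γ → Γ → ℝ,
      (∀ x y, 0 ≤ f x y) →
      (∀ g x y, f (g * x) (g * y) = f x y) →
      (∀ x, f x x = 0) →
      (∀ x y, f x y = f y x) →
      (∀ (n : ℕ) (x : Fin n → Γ) (c : Fin n → ℝ), (∑ i, c i = 0) →
        ∑ i, ∑ j, c i * c j * f (x i) (x j) ≤ 0) →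
      ∃ C : ℝ, ∀ x y, f x y ≤ C := by
  intro f hnonneg hinv hdiag hsymm hneg
  let e : Shrink.{0} Γ ≃* Γ := Shrink.mulEquiv
  have : Countable (Shrink.{0} Γ) := e.toEquiv.countable_iff.2 ‹_›
  obtain ⟨C, hC⟩ := invariant_negDef_bounded_of_type_zero (Shrink.{0} Γ)
    (fun Ω mΩ μ a h1 hmul hmp S hS hfin ↦ by
      obtain ⟨C, hC, hle⟩ := hdyn Ω mΩ μ (fun g ↦ a (e.symm g)) (by simpa using h1)
        (fun g h ω ↦ by simp [hmul]) (fun g ↦ hmp _) S hS (fun g ↦ hfin _)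
      exact ⟨C, hC, fun g ↦ by simpa using hle (e g)⟩)
    (fun x y ↦ f (e x) (e y)) (fun _ _ ↦ hnonneg _ _) (fun g x y ↦ by simp [hinv])
    (fun _ ↦ hdiag _) (fun _ _ ↦ hsymm _ _) (fun n x c hc ↦ hneg n (fun i ↦ e (x i)) c hc)
  exact ⟨C, fun x y ↦ by simpa using hC (e.symm x) (e.symm y)⟩
end
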